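/- (Inductive deformation lemma) Let P₁,…,P₆ be six planes in general position in P³(ℂ) with equations p_i = 0. Let Δ_k be a collection of k double lines of the configuration, let D = P_{i₁} ∩ P_{i₂} be an additional double line, and set Δ_{k+1} = Δ_k ∪ D. Suppose S_k = (s_k = 0) is a sextic in general position with respect to the planes such that for every i the complement P_i \ (∪_{j≠i} P_j \ (Δ_k ∩ S_k)) is hyperbolic. Then for all sufficiently small ε_k ≠ 0, the sextic S_{k+1} = (p_{i₃} p_{i₄} p_{i₅}² p_{i₆}² = ε_k s_k) is such that for every i the complement P_i \ (∪_{j≠i} P_j \ (Δ_{k+1} ∩ S_{k+1})) is hyperbolic. -/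

import Mathlib

/- The inductive deformation lemma of Zaidenberg's method.

Six planes `P i = (p i = 0)` in general position (no quadruple point) in
`P³(ℂ) = Projectivization ℂ (Fin 4 → ℂ)` are given by nonzero homogeneous degree-1
polynomials.  A double line of the configuration is `P i ∩ P j`, `i ≠ j`, encoded by the
unordered pair `s(i, j) : Sym2 (Fin 6)`; `Δ` is a collection of `k` double lines, and
`D = P (σ 0) ∩ P (σ 1)` is an extra one, where `σ` is a permutation of the indices
(`{i₁, …, i₆} = {1, …, 6}`).  A sextic `(sk = 0)` is in general position with respect
to the planes if it avoids the triple points.  The complement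
`P i \ (⋃_{j ≠ i} P j \ (Δ ∩ S))` is hyperbolic if every holomorphic map `f : ℂ → P³(ℂ)`
(holomorphy via local nonvanishing holomorphic lifts, `HoloToProj`) with image in `P i`
and meeting the other planes only at points of `Δ ∩ S` is constant; membership is
tested on representatives, all conditions being homogeneous hence scale invariant. -/

open Metric Filter MvPolynomial
open scoped Topology

noncomputable section

/-- A map from `ℂ` to a projective space is holomorphic if it locally admits nonvanishing
holomorphic lifts. -/
def HoloToProj {m : ℕ} (f : ℂ → Projectivization ℂ (Fin m → ℂ)) : Prop :=
  ∀ z₀ : ℂ, ∃ W : Set ℂ, IsOpen W ∧ z₀ ∈ W ∧ ∃ F : ℂ → (Fin m → ℂ),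
    DifferentiableOn ℂ F W ∧ ∀ z ∈ W, ∃ h : F z ≠ 0, f z = Projectivization.mk ℂ (F z) h

/-
If the complements fail to be hyperbolic for a sequence `ε → 0`, Brody reparametrization yields
entire curves in them that converge locally uniformly to a nonconstant entire curve `g` in `P_i`.
If `g` lies in a second plane `P_j`, it stays in a double line. There, by Hurwitz, it avoids the
other planes, except possibly the one whose intersection with `P_i` is `D`: the approximating
curves meet them only on `S_k`, which avoids the triple points. So `g` omits three points of the
line and is constant by Picard. If `g` lies in no other plane, then by Hurwitz every point of `g`
on a `P_j` is a limit of points of the approximating curves on `P_j`. If `P_i ∩ P_j ≠ D`, it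
lands in `Δ_k ∩ S_k`. If `P_i ∩ P_j = D`, the limit equation `p_{i₃} p_{i₄} p_{i₅}² p_{i₆}² = 0`
puts it on a third plane, hence also on `S_k` by the previous case, which is impossible at a triple
point. Thus `g` is an entire curve in the old complement, contradicting its hyperbolicity.
-/

open scoped LinearAlgebra.Projectivization

section Points

variable {m : ℕ}

lemma exists_rep_mk_eq_smul {v : Fin m → ℂ} (hv : v ≠ 0) :
    ∃ c : ℂ, c ≠ 0 ∧ (Projectivization.mk ℂ v hv).rep = c • v := by
  obtain ⟨c, hc⟩ := Projectivization.exists_smul_eq_mk_rep ℂ v hv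
  exact ⟨c, c.ne_zero, hc.symm⟩

lemma eq_of_smul_rep_eq_smul_rep {x y : ℙ ℂ (Fin m → ℂ)} {c d : ℂ} (hc : c ≠ 0)
    (h : c • x.rep = d • y.rep) : x = y := by
  rw [← x.mk_rep, ← y.mk_rep, Projectivization.mk_eq_mk_iff']
  exact ⟨c⁻¹ * d, by rw [mul_smul, ← h, inv_smul_smul₀ hc]⟩

lemma exists_rep_apply_ne_zero (x : ℙ ℂ (Fin m → ℂ)) :
    ∃ a, x.rep a ≠ 0 ∧ ∀ b, ‖x.rep b‖ ≤ ‖x.rep a‖ := by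
  obtain ⟨c, hc⟩ := Function.ne_iff.1 x.rep_nonzero
  have : Nonempty (Fin m) := ⟨c⟩
  obtain ⟨a, ha⟩ := Finite.exists_max fun b => ‖x.rep b‖
  exact ⟨a, norm_pos_iff.1 ((norm_pos_iff.2 hc).trans_le (ha c)), ha⟩

/-- The representative of `x` whose `a`-th coordinate is `1`, that is, the affine coordinates
of `x` in the chart `x_a ≠ 0`. Off that chart it is `0`. -/
def affineLift (a : Fin m) (x : ℙ ℂ (Fin m → ℂ)) : Fin m → ℂ := (x.rep a)⁻¹ • x.rep

lemma affineLift_mk (a : Fin m) {v : Fin m → ℂ} (hv : v ≠ 0) :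
    affineLift a (Projectivization.mk ℂ v hv) = (v a)⁻¹ • v := by
  obtain ⟨c, hc, h⟩ := exists_rep_mk_eq_smul hv
  rw [affineLift, h, Pi.smul_apply, smul_eq_mul, mul_inv, mul_comm, smul_smul, mul_assoc,
    inv_mul_cancel₀ hc, mul_one]

lemma affineLift_apply_self {a : Fin m} {x : ℙ ℂ (Fin m → ℂ)} (hx : x.rep a ≠ 0) :
    affineLift a x a = 1 := inv_mul_cancel₀ hx

lemma affineLift_apply_ne_zero {a b : Fin m} {x : ℙ ℂ (Fin m → ℂ)} (ha : x.rep a ≠ 0)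
    (hb : x.rep b ≠ 0) : affineLift a x b ≠ 0 := mul_ne_zero (inv_ne_zero ha) hb

lemma rep_apply_ne_zero_of_affineLift {a b : Fin m} {x : ℙ ℂ (Fin m → ℂ)}
    (h : affineLift a x b ≠ 0) : x.rep a ≠ 0 :=
  inv_eq_zero.not.1 (left_ne_zero_of_mul h)

lemma affineLift_eq_smul_affineLift (a : Fin m) {b : Fin m} {x : ℙ ℂ (Fin m → ℂ)}
    (hb : x.rep b ≠ 0) : affineLift a x = (affineLift b x a)⁻¹ • affineLift b x := by
  simp only [affineLift, Pi.smul_apply, smul_eq_mul, mul_inv, inv_inv, smul_smul]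
  rw [mul_comm (x.rep b), mul_assoc, mul_inv_cancel₀ hb, mul_one]

lemma eq_of_affineLift_eq_smul {a b : Fin m} {x y : ℙ ℂ (Fin m → ℂ)} {c : ℂ}
    (hx : x.rep a ≠ 0) (h : affineLift a x = c • affineLift b y) : x = y :=
  eq_of_smul_rep_eq_smul_rep (inv_ne_zero hx) (h.trans (smul_smul c _ _))

lemma eval_smul_of_isHomogeneous {κ R : Type*} [CommSemiring R] {P : MvPolynomial κ R} {d : ℕ}
    (hP : P.IsHomogeneous d) (c : R) (v : κ → R) : eval (c • v) P = c ^ d * eval v P := by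
  rw [eval_eq, eval_eq, Finset.mul_sum]
  refine Finset.sum_congr rfl fun e he => ?_
  have hdeg : ∑ i ∈ e.support, e i = d := by
    rw [← hP (mem_support_iff.1 he), Finsupp.weight_apply, Finsupp.sum]
    simp
  simp only [Pi.smul_apply, smul_eq_mul, mul_pow, Finset.prod_mul_distrib,
    Finset.prod_pow_eq_pow_sum, hdeg]
  ring

lemma eval_affineLift_eq_zero_iff {P : MvPolynomial (Fin m) ℂ} {d : ℕ} (hP : P.IsHomogeneous d)
    {a : Fin m} {x : ℙ ℂ (Fin m → ℂ)} (hx : x.rep a ≠ 0) :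
    eval (affineLift a x) P = 0 ↔ eval x.rep P = 0 := by
  simp [affineLift, eval_smul_of_isHomogeneous hP, hx]

/-- The points whose coordinates are all at most twice the `a`-th one in absolute value. These
sets cover the projective space and are compact in the affine coordinates of `affineLift a`. -/
def dominantChart (a : Fin m) : Set (ℙ ℂ (Fin m → ℂ)) :=
  {x | ∀ b, ‖x.rep b‖ ≤ 2 * ‖x.rep a‖}

lemma rep_apply_ne_zero_of_mem_dominantChart {a : Fin m} {x : ℙ ℂ (Fin m → ℂ)}
    (hx : x ∈ dominantChart a) : x.rep a ≠ 0 := by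
  obtain ⟨b, hb⟩ := Function.ne_iff.1 x.rep_nonzero
  intro ha
  have := hx b
  simp only [ha, norm_zero, mul_zero, norm_le_zero_iff] at this
  exact hb this

lemma mem_dominantChart_iff {a : Fin m} {x : ℙ ℂ (Fin m → ℂ)} (hx : x.rep a ≠ 0) :
    x ∈ dominantChart a ↔ ‖affineLift a x‖ ≤ 2 := by
  rw [pi_norm_le_iff_of_nonneg zero_le_two]
  refine forall_congr' fun b => ?_
  rw [affineLift, Pi.smul_apply, smul_eq_mul, norm_mul, norm_inv, inv_mul_eq_div,
    div_le_iff₀ (norm_pos_iff.2 hx)]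

end Points

section Convergence

variable {m : ℕ} {κ : Type*} {l : Filter κ} {u : κ → ℙ ℂ (Fin m → ℂ)} {x y : ℙ ℂ (Fin m → ℂ)}

/-- Convergence in projective space, in the affine coordinates of some chart around the limit. -/
def TendstoProj (u : κ → ℙ ℂ (Fin m → ℂ)) (l : Filter κ) (x : ℙ ℂ (Fin m → ℂ)) : Prop :=
  ∃ a, x.rep a ≠ 0 ∧ Tendsto (fun k => affineLift a (u k)) l (𝓝 (affineLift a x))

namespace TendstoProj

lemma tendsto_affineLift (h : TendstoProj u l x) {a : Fin m} (ha : x.rep a ≠ 0) :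
    Tendsto (fun k => affineLift a (u k)) l (𝓝 (affineLift a x)) := by
  obtain ⟨b, hb, h⟩ := h
  have hcoord (c : Fin m) : Tendsto (fun k => affineLift b (u k) c) l (𝓝 (affineLift b x c)) :=
    ((continuous_apply c).tendsto _).comp h
  have hchart : ∀ᶠ k in l, affineLift b (u k) b ≠ 0 :=
    (hcoord b).eventually_ne (affineLift_apply_ne_zero hb hb)
  rw [affineLift_eq_smul_affineLift a hb]
  refine (((hcoord a).inv₀ (affineLift_apply_ne_zero hb ha)).smul h).congr' ?_
  filter_upwards [hchart] with k hk
  exact (affineLift_eq_smul_affineLift a (rep_apply_ne_zero_of_affineLift hk)).symm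

lemma eventually_rep_apply_ne_zero (h : TendstoProj u l x) {a : Fin m} (ha : x.rep a ≠ 0) :
    ∀ᶠ k in l, (u k).rep a ≠ 0 := by
  have ha' := ((continuous_apply a).tendsto _).comp (h.tendsto_affineLift ha)
  filter_upwards [ha'.eventually_ne (affineLift_apply_ne_zero ha ha)] with k hk
  exact rep_apply_ne_zero_of_affineLift hk

lemma unique [l.NeBot] (hx : TendstoProj u l x) (hy : TendstoProj u l y) : x = y := by
  obtain ⟨a, ha, hx⟩ := hx
  obtain ⟨b, hb, hy⟩ := hy
  have hab : affineLift b y b • affineLift a x = affineLift a x b • affineLift b y := by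
    refine tendsto_nhds_unique ((((continuous_apply b).tendsto _).comp hy).smul hx) ?_
    refine ((((continuous_apply b).tendsto _).comp hx).smul hy).congr fun k => ?_
    simp only [affineLift, Function.comp_apply, Pi.smul_apply, smul_eq_mul, smul_smul]
    ring_nf
  rw [affineLift_apply_self hb, one_smul] at hab
  exact eq_of_affineLift_eq_smul ha hab

lemma eval_eq_zero_of_frequently_eq_mul {q s : MvPolynomial (Fin m) ℂ} {d : ℕ} {ε : κ → ℂ}
    (hq : q.IsHomogeneous d) (hs : s.IsHomogeneous d) (h : TendstoProj u l x)
    (hε : Tendsto ε l (𝓝 0)) (hqs : ∃ᶠ k in l, eval (u k).rep q = ε k * eval (u k).rep s) :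
    eval x.rep q = 0 := by
  obtain ⟨a, ha, h⟩ := h
  have hlim (P : MvPolynomial (Fin m) ℂ) := (P.continuous_eval.tendsto _).comp h
  have hdiff : Tendsto (fun k => eval (affineLift a (u k)) q - ε k * eval (affineLift a (u k)) s)
      l (𝓝 (eval (affineLift a x) q)) := by
    simpa using (hlim q).sub (hε.mul (hlim s))
  rw [← eval_affineLift_eq_zero_iff hq ha]
  by_contra hne
  refine hqs (hdiff.eventually_ne hne |>.mono fun k hk hk' => hk ?_)
  simp only [affineLift, eval_smul_of_isHomogeneous hq, eval_smul_of_isHomogeneous hs, hk']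
  ring

lemma eval_eq_zero_of_frequently {P : MvPolynomial (Fin m) ℂ} {d : ℕ} (hP : P.IsHomogeneous d)
    (h : TendstoProj u l x) (hPu : ∃ᶠ k in l, eval (u k).rep P = 0) : eval x.rep P = 0 :=
  h.eval_eq_zero_of_frequently_eq_mul hP (isHomogeneous_zero _ _ d)
    (tendsto_const_nhds (x := 0)) (by simpa using hPu)

lemma eventually_mem_dominantChart (h : TendstoProj u l x) {a : Fin m} (ha : x.rep a ≠ 0)
    (hmax : ∀ b, ‖x.rep b‖ ≤ ‖x.rep a‖) : ∀ᶠ k in l, u k ∈ dominantChart a := by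
  have hnorm : ‖affineLift a x‖ < 2 := by
    refine lt_of_le_of_lt ((pi_norm_le_iff_of_nonneg zero_le_one).2 fun b => ?_) one_lt_two
    rw [affineLift, Pi.smul_apply, smul_eq_mul, norm_mul, norm_inv]
    exact inv_mul_le_one_of_le₀ (hmax b) (norm_nonneg _)
  filter_upwards [(h.tendsto_affineLift ha).norm.eventually_lt_const hnorm,
    h.eventually_rep_apply_ne_zero ha] with k hk hka
  exact (mem_dominantChart_iff hka).2 hk.le

end TendstoProj

end Convergence

section HolomorphicCurves

variable {m : ℕ} {f g : ℂ → ℙ ℂ (Fin m → ℂ)}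

namespace HoloToProj

lemma comp {φ : ℂ → ℂ} (hf : HoloToProj f) (hφ : Differentiable ℂ φ) :
    HoloToProj fun z => f (φ z) := by
  intro z
  obtain ⟨W, hW, hz, F, hF, h⟩ := hf (φ z)
  exact ⟨φ ⁻¹' W, hW.preimage hφ.continuous, hz, F ∘ φ,
    hF.comp hφ.differentiableOn fun _ hw => hw, fun w hw => h (φ w) hw⟩

lemma eventually_rep_apply_ne_zero (hf : HoloToProj f) {z : ℂ} {a : Fin m}
    (hz : (f z).rep a ≠ 0) : ∀ᶠ w in 𝓝 z, (f w).rep a ≠ 0 := by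
  obtain ⟨W, hW, hzW, F, hF, h⟩ := hf z
  have hiff : ∀ w ∈ W, (f w).rep a ≠ 0 ↔ F w a ≠ 0 := fun w hw => by
    obtain ⟨hFw, hfw⟩ := h w hw
    obtain ⟨c, hc, hrep⟩ := exists_rep_mk_eq_smul hFw
    simp [hfw, hrep, hc]
  have hcont : ContinuousAt (fun w => F w a) z :=
    (continuousAt_pi.1 (hF.continuousOn.continuousAt (hW.mem_nhds hzW))) a
  filter_upwards [hcont.eventually_ne ((hiff z hzW).1 hz), hW.mem_nhds hzW] with w hw hwW
  exact (hiff w hwW).2 hw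

lemma differentiableAt_affineLift (hf : HoloToProj f) {z : ℂ} {a : Fin m}
    (hz : (f z).rep a ≠ 0) : DifferentiableAt ℂ (fun w => affineLift a (f w)) z := by
  obtain ⟨W, hW, hzW, F, hF, h⟩ := hf z
  have hlift : ∀ w ∈ W, affineLift a (f w) = (F w a)⁻¹ • F w := fun w hw => by
    obtain ⟨hFw, hfw⟩ := h w hw
    rw [hfw, affineLift_mk]
  have hFz : F z a ≠ 0 := fun h0 => by
    have := affineLift_apply_ne_zero hz hz
    rw [hlift z hzW, h0] at this
    simp at this
  have hd := hF.differentiableAt (hW.mem_nhds hzW)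
  refine (((differentiableAt_pi.1 hd a).inv hFz).smul hd).congr_of_eventuallyEq ?_
  filter_upwards [hW.mem_nhds hzW] with w hw using hlift w hw

lemma tendstoProj (hf : HoloToProj f) (z : ℂ) : TendstoProj f (𝓝 z) (f z) := by
  obtain ⟨a, ha, -⟩ := exists_rep_apply_ne_zero (f z)
  exact ⟨a, ha, (hf.differentiableAt_affineLift ha).continuousAt⟩

lemma eventually_mem_dominantChart (hf : HoloToProj f) (z : ℂ) :
    ∃ a, ∀ᶠ w in 𝓝 z, f w ∈ dominantChart a :=
  let ⟨a, ha, hmax⟩ := exists_rep_apply_ne_zero (f z)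
  ⟨a, (hf.tendstoProj z).eventually_mem_dominantChart ha hmax⟩

lemma analyticAt_eval_affineLift (hf : HoloToProj f) {z : ℂ} {a : Fin m}
    (hz : (f z).rep a ≠ 0) (P : MvPolynomial (Fin m) ℂ) :
    AnalyticAt ℂ (fun w => eval (affineLift a (f w)) P) z := by
  have hlift : AnalyticAt ℂ (fun w => affineLift a (f w)) z := by
    rw [Complex.analyticAt_iff_eventually_differentiableAt]
    filter_upwards [hf.eventually_rep_apply_ne_zero hz] with w hw
    exact hf.differentiableAt_affineLift hw
  exact AnalyticAt.aeval_mvPolynomial (analyticAt_pi_iff.1 hlift) P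

lemma apply_eq_apply_of_mapsTo_dominantChart (hf : HoloToProj f) {a : Fin m}
    (h : ∀ z, f z ∈ dominantChart a) (z w : ℂ) : f z = f w := by
  have hrep (z : ℂ) := rep_apply_ne_zero_of_mem_dominantChart (h z)
  have hd : Differentiable ℂ fun z => affineLift a (f z) :=
    fun z => hf.differentiableAt_affineLift (hrep z)
  have hb : Bornology.IsBounded (Set.range fun z => affineLift a (f z)) :=
    isBounded_iff_forall_norm_le.2
      ⟨2, Set.forall_mem_range.2 fun z => (mem_dominantChart_iff (hrep z)).1 (h z)⟩
  exact eq_of_affineLift_eq_smul (hrep z)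
    ((hd.apply_eq_apply_of_bounded hb z w).trans (one_smul ℂ _).symm)

lemma eval_eq_zero_of_eventually (hf : HoloToProj f) {P : MvPolynomial (Fin m) ℂ} {d : ℕ}
    (hP : P.IsHomogeneous d) {z₀ : ℂ} (h : ∀ᶠ z in 𝓝 z₀, eval (f z).rep P = 0) (z : ℂ) :
    eval (f z).rep P = 0 := by
  let V : Set ℂ := {z | ∀ᶠ w in 𝓝 z, eval (f w).rep P = 0}
  have hopen : IsOpen V := isOpen_setOfPred_eventually_nhds
  have hclosed : IsClosed V := by
    refine isOpen_compl_iff.1 (isOpen_iff_eventually.2 fun z hz => ?_)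
    obtain ⟨a, ha, -⟩ := exists_rep_apply_ne_zero (f z)
    have hlift : ∀ᶠ w in 𝓝 z, eval (affineLift a (f w)) P = 0 ↔ eval (f w).rep P = 0 :=
      (hf.eventually_rep_apply_ne_zero ha).mono fun w => eval_affineLift_eq_zero_iff hP
    rcases (hf.analyticAt_eval_affineLift ha P).eventually_eq_zero_or_eventually_ne_zero with h | h
    · exact absurd ((h.and hlift).mono fun w hw => hw.2.1 hw.1) hz
    · rw [← nhdsNE_sup_pure z, eventually_sup, eventually_pure]
      refine ⟨?_, hz⟩
      filter_upwards [h, hlift.filter_mono nhdsWithin_le_nhds] with w hw hwP hwV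
      exact hw (hwP.2 hwV.self_of_nhds)
  have huniv : V = Set.univ := IsClopen.eq_univ ⟨hclosed, hopen⟩ ⟨z₀, h⟩
  exact (huniv.ge (Set.mem_univ z) : z ∈ V).self_of_nhds

end HoloToProj

end HolomorphicCurves

section Brody

variable {m : ℕ}

/-- How far one can move from `z` while `f` stays in a single set `dominantChart a`. Its inverse
plays the role of the derivative of `f` in Brody's reparametrization. -/
def chartRadius (f : ℂ → ℙ ℂ (Fin m → ℂ)) (z : ℂ) : ℝ :=
  ‖fun a => infDist z (f ⁻¹' dominantChart a)ᶜ‖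

variable {f : ℂ → ℙ ℂ (Fin m → ℂ)}

lemma continuous_chartRadius : Continuous (chartRadius f) :=
  (continuous_pi fun _ => continuous_infDist_pt _).norm

lemma exists_apply_notMem_dominantChart_of_chartRadius_lt (hf : HoloToProj f)
    (hne : ¬ ∀ z w, f z = f w) {z : ℂ} {r : ℝ} (hr : chartRadius f z < r) (a : Fin m) :
    ∃ w ∈ ball z r, f w ∉ dominantChart a := by
  have hmiss : ((f ⁻¹' dominantChart a)ᶜ).Nonempty := by
    by_contra h
    rw [Set.not_nonempty_iff_eq_empty, Set.compl_empty_iff] at h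
    exact hne (hf.apply_eq_apply_of_mapsTo_dominantChart fun z => h.ge (Set.mem_univ z))
  have hdist : infDist z (f ⁻¹' dominantChart a)ᶜ < r :=
    (le_abs_self _).trans (norm_le_pi_norm (fun a => infDist z (f ⁻¹' dominantChart a)ᶜ) a)
      |>.trans_lt hr
  obtain ⟨w, hw, hzw⟩ := (infDist_lt_iff hmiss).1 hdist
  exact ⟨w, by rwa [mem_ball'], hw⟩

lemma exists_mapsTo_ball_dominantChart [Nonempty (Fin m)] {z : ℂ} {r : ℝ}
    (hr : r ≤ chartRadius f z) : ∃ a, Set.MapsTo f (ball z r) (dominantChart a) := by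
  obtain ⟨a, ha⟩ := Finite.exists_max fun a => infDist z (f ⁻¹' dominantChart a)ᶜ
  have hle : chartRadius f z ≤ infDist z (f ⁻¹' dominantChart a)ᶜ :=
    (pi_norm_le_iff_of_nonneg infDist_nonneg).2 fun b =>
      (Real.norm_of_nonneg infDist_nonneg).trans_le (ha b)
  refine ⟨a, fun w hw => not_not.1 fun hwa => ?_⟩
  exact (infDist_le_dist_of_mem (x := z) (s := (f ⁻¹' dominantChart a)ᶜ) hwa).not_gt
    ((mem_ball'.1 hw).trans_le (hr.trans hle))

lemma chartRadius_pos (hf : HoloToProj f) (hne : ¬ ∀ z w, f z = f w) (z : ℂ) :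
    0 < chartRadius f z := by
  obtain ⟨a, ha⟩ := hf.eventually_mem_dominantChart z
  obtain ⟨r, hr, hball⟩ := Metric.eventually_nhds_iff_ball.1 ha
  by_contra! h
  obtain ⟨w, hw, hwa⟩ :=
    exists_apply_notMem_dominantChart_of_chartRadius_lt hf hne (h.trans_lt hr) a
  exact hwa (hball w hw)

/-- Hofer's lemma provides a point at which `chartRadius f` is, up to a factor `2`, minimal
on a disc whose radius is a large multiple of `chartRadius f`. -/
lemma exists_rescaling (hf : HoloToProj f) (hne : ¬ ∀ z w, f z = f w) {R : ℝ} (hR : 0 < R) :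
    ∃ z s : ℂ, (∀ a, ∃ w ∈ ball 0 1, f (z + s * w) ∉ dominantChart a) ∧
      ∀ ζ ∈ ball 0 R, ∃ a, ∀ w ∈ ball ζ (1 / 4), f (z + s * w) ∈ dominantChart a := by
  have hpos := chartRadius_pos hf hne
  have : Nonempty (Fin m) := let ⟨a, _⟩ := hf.eventually_mem_dominantChart 0; ⟨a⟩
  obtain ⟨r, -, z, -, -, hr, hmin⟩ := hofer 0 (2 * R * chartRadius f 0)
    (mul_pos (by positivity) (hpos 0)) (continuous_chartRadius.inv₀ fun z => (hpos z).ne')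
    fun z => inv_nonneg.2 (hpos z).le
  set ρ := chartRadius f z with hρ
  have hρpos : 0 < ρ := hpos z
  have hRr : 2 * ρ * R ≤ r := by
    rw [Pi.inv_apply, Pi.inv_apply, mul_inv_cancel_right₀ (hpos 0).ne', ← div_eq_mul_inv,
      le_div_iff₀ hρpos] at hr
    linarith
  have hs : ‖((2 * ρ : ℝ) : ℂ)‖ = 2 * ρ := Complex.norm_of_nonneg (by positivity)
  have hs0 : ((2 * ρ : ℝ) : ℂ) ≠ 0 := norm_ne_zero_iff.1 (by rw [hs]; positivity)
  refine ⟨z, (2 * ρ : ℝ), fun a => ?_, fun ζ hζ => ?_⟩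
  · obtain ⟨w, hw, hwa⟩ := exists_apply_notMem_dominantChart_of_chartRadius_lt hf hne
      (lt_two_mul_self hρpos) a
    refine ⟨(w - z) / (2 * ρ : ℝ), ?_, by rwa [mul_div_cancel₀ _ hs0, add_sub_cancel]⟩
    rwa [mem_ball_zero_iff, norm_div, hs, div_lt_one (by positivity), ← dist_eq_norm]
  · have hζr : dist z (z + (2 * ρ : ℝ) * ζ) ≤ r := by
      rw [dist_self_add_right, norm_mul, hs]
      exact (mul_le_mul_of_nonneg_left (mem_ball_zero_iff.1 hζ).le (by positivity)).trans hRr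
    have hhalf : ρ / 2 ≤ chartRadius f (z + (2 * ρ : ℝ) * ζ) := by
      have := hmin _ hζr
      rw [Pi.inv_apply, Pi.inv_apply, inv_le_comm₀ (hpos _) (by positivity), ← hρ, mul_inv,
        inv_inv] at this
      linarith
    obtain ⟨a, ha⟩ := exists_mapsTo_ball_dominantChart hhalf
    refine ⟨a, fun w hw => ha ?_⟩
    rw [mem_ball, dist_add_left, dist_eq_norm, ← mul_sub, norm_mul, hs, ← dist_eq_norm]
    linarith [mul_lt_mul_of_pos_left (mem_ball.1 hw) (by positivity : 0 < 2 * ρ)]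

end Brody

section Montel

variable {κ E : Type*} [NormedAddCommGroup E]

lemma continuousAt_of_tendsto_prod {X : Type*} [TopologicalSpace X] {l : Filter κ} [l.NeBot]
    {u : κ → X → E} {v : X → E} {x : X}
    (h : ∀ᶠ y in 𝓝 x, Tendsto (fun q : κ × X => u q.1 q.2) (l ×ˢ 𝓝 y) (𝓝 (v y))) :
    ContinuousAt v x := by
  refine Metric.nhds_basis_closedBall.tendsto_right_iff.2 fun ε hε => ?_
  have hnear := h.self_of_nhds.eventually (closedBall_mem_nhds _ hε)
  filter_upwards [h, (eventually_swap_iff.1 hnear).curry] with y hy hyε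
  have hlim : Tendsto (u · y) l (𝓝 (v y)) :=
    hy.comp (tendsto_id.prodMk (tendsto_const_nhds (x := y)))
  exact isClosed_closedBall.mem_of_tendsto hlim hyε

variable [NormedSpace ℂ E] [ProperSpace E] {l : Ultrafilter κ} {u : κ → ℂ → E}

theorem montel {z : ℂ} {r M : ℝ}
    (hu : ∀ᶠ k in (l : Filter κ), DifferentiableOn ℂ (u k) (ball z r) ∧
      ∀ w ∈ ball z r, ‖u k w‖ ≤ M) :
    ∃ v : ℂ → E, DifferentiableOn ℂ v (ball z r) ∧ ∀ w ∈ ball z r,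
      Tendsto (fun q : κ × ℂ => u q.1 q.2) ((l : Filter κ) ×ˢ 𝓝 w) (𝓝 (v w)) := by
  have hpointwise : ∀ w ∈ ball z r, ∃ y, Tendsto (u · w) l (𝓝 y) := fun w hw => by
    obtain ⟨y, -, hy⟩ := (isCompact_closedBall (0 : E) M).ultrafilter_le_nhds' (l.map (u · w))
      (hu.mono fun k hk => mem_closedBall_zero_iff.2 (hk.2 w hw))
    exact ⟨y, hy⟩
  choose! v hv using hpointwise
  have hjoint : ∀ w ∈ ball z r,
      Tendsto (fun q : κ × ℂ => u q.1 q.2) ((l : Filter κ) ×ˢ 𝓝 w) (𝓝 (v w)) := fun w hw => by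
    obtain ⟨ρ, hρ, hball⟩ := isOpen_iff.1 isOpen_ball w hw
    have hlip : ∀ᶠ q : κ × ℂ in (l : Filter κ) ×ˢ 𝓝 w,
        dist (u q.1 q.2) (v w) ≤ 2 * M / ρ * dist q.2 w + dist (u q.1 w) (v w) := by
      filter_upwards [hu.prod_mk (ball_mem_nhds w hρ)] with ⟨k, y⟩ ⟨⟨hd, hM⟩, hy⟩
      refine (dist_triangle _ (u k w) _).trans (add_le_add_left ?_ _)
      refine Complex.dist_le_div_mul_dist_of_mapsTo_ball (hd.mono hball) (fun y' hy' => ?_) hy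
      rw [mem_closedBall, two_mul]
      exact dist_le_norm_add_norm _ _ |>.trans (add_le_add (hM _ (hball hy')) (hM w hw))
    refine tendsto_iff_dist_tendsto_zero.2 (squeeze_zero' (.of_forall fun _ => dist_nonneg) hlip ?_)
    have hsnd : Tendsto (fun q : κ × ℂ => dist q.2 w) ((l : Filter κ) ×ˢ 𝓝 w) (𝓝 0) :=
      (tendsto_iff_dist_tendsto_zero.1 tendsto_id).comp tendsto_snd
    have hfst : Tendsto (fun q : κ × ℂ => dist (u q.1 w) (v w)) ((l : Filter κ) ×ˢ 𝓝 w) (𝓝 0) :=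
      (tendsto_iff_dist_tendsto_zero.1 (hv w hw)).comp tendsto_fst
    simpa using (hsnd.const_mul (2 * M / ρ)).add hfst
  refine ⟨v, ?_, hjoint⟩
  have hunif : TendstoLocallyUniformlyOn u v (l : Filter κ) (ball z r) := by
    refine isOpen_ball.tendstoLocallyUniformlyOn_iff_forall_tendsto.2 fun w hw => ?_
    have hcont : ContinuousAt v w := continuousAt_of_tendsto_prod (u := u) (l := (l : Filter κ))
      (eventually_of_mem (isOpen_ball.mem_nhds hw) hjoint)
    exact ((hcont.tendsto.comp tendsto_snd).prodMk_nhds (hjoint w hw)).mono_right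
      (nhds_le_uniformity _)
  exact hunif.differentiableOn (hu.mono fun _ h => h.1) isOpen_ball

end Montel

section Limits

variable {m : ℕ} {κ : Type*}

/-- Locally uniform convergence of curves in projective space, encoded as continuous
convergence: `u k w → g z` as `k → l` and `w → z`. -/
def TendstoCurve (u : κ → ℂ → ℙ ℂ (Fin m → ℂ)) (l : Filter κ) (g : ℂ → ℙ ℂ (Fin m → ℂ)) : Prop :=
  ∀ z, TendstoProj (fun q : κ × ℂ => u q.1 q.2) (l ×ˢ 𝓝 z) (g z)

/-- Hyperbolicity in the sense of Brody: every entire curve in `X` is constant. -/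
def IsHyperbolic (X : Set (ℙ ℂ (Fin m → ℂ))) : Prop :=
  ∀ f : ℂ → ℙ ℂ (Fin m → ℂ), HoloToProj f → (∀ z, f z ∈ X) → ∀ z w, f z = f w

lemma exists_tendstoProj_of_mapsTo_dominantChart {l : Ultrafilter κ}
    {u : κ → ℂ → ℙ ℂ (Fin m → ℂ)} (hu : ∀ k, HoloToProj (u k)) {a : Fin m} {z : ℂ} {r : ℝ}
    (h : ∀ᶠ k in (l : Filter κ), Set.MapsTo (u k) (ball z r) (dominantChart a)) :
    ∃ v : ℂ → (Fin m → ℂ), DifferentiableOn ℂ v (ball z r) ∧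
      ∀ w ∈ ball z r, ∃ hw : v w ≠ 0, TendstoProj (fun q : κ × ℂ => u q.1 q.2)
        ((l : Filter κ) ×ˢ 𝓝 w) (Projectivization.mk ℂ (v w) hw) := by
  obtain ⟨v, hd, hv⟩ := montel (l := l) (u := fun k w => affineLift a (u k w)) (M := 2) <|
    h.mono fun k hk =>
      have hrep (w : ℂ) (hw : w ∈ ball z r) := rep_apply_ne_zero_of_mem_dominantChart (hk hw)
      ⟨fun w hw => ((hu k).differentiableAt_affineLift (hrep w hw)).differentiableWithinAt,
        fun w hw => (mem_dominantChart_iff (hrep w hw)).1 (hk hw)⟩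
  refine ⟨v, hd, fun w hw => ?_⟩
  have hone : v w a = 1 := by
    refine tendsto_nhds_unique (((continuous_apply a).tendsto _).comp (hv w hw))
      (tendsto_const_nhds.congr' ?_)
    filter_upwards [h.prod_mk (isOpen_ball.mem_nhds hw)] with q hq
    exact (affineLift_apply_self (rep_apply_ne_zero_of_mem_dominantChart (hq.1 hq.2))).symm
  have hvw : v w ≠ 0 := fun h0 => zero_ne_one (congrFun h0 a ▸ hone)
  have hlift : affineLift a (Projectivization.mk ℂ (v w) hvw) = v w := by
    rw [affineLift_mk, hone, inv_one, one_smul]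
  refine ⟨hvw, a, rep_apply_ne_zero_of_affineLift (b := a) ?_, hlift.symm ▸ hv w hw⟩
  rw [hlift, hone]
  exact one_ne_zero

lemma exists_tendstoCurve {l : Ultrafilter κ} {u : κ → ℂ → ℙ ℂ (Fin m → ℂ)}
    (hu : ∀ k, HoloToProj (u k))
    (hchart : ∀ z, ∃ r > 0, ∀ᶠ k in (l : Filter κ), ∃ a,
      Set.MapsTo (u k) (ball z r) (dominantChart a)) :
    ∃ g, HoloToProj g ∧ TendstoCurve u l g := by
  choose r hr hchart using hchart
  have hlocal (z : ℂ) := exists_tendstoProj_of_mapsTo_dominantChart hu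
    (Ultrafilter.eventually_exists_iff.1 (hchart z)).choose_spec
  choose v hd hv0 hv using hlocal
  have hmem (z : ℂ) : z ∈ ball z (r z) := mem_ball_self (hr z)
  refine ⟨fun z => Projectivization.mk ℂ (v z z) (hv0 z z (hmem z)), fun z => ?_,
    fun z => hv z z (hmem z)⟩
  exact ⟨ball z (r z), isOpen_ball, hmem z, v z, hd z,
    fun w hw => ⟨hv0 z w hw, (hv w w (hmem w)).unique (hv z w hw)⟩⟩

lemma TendstoCurve.eventually_mapsTo_dominantChart {l : Filter κ} {u : κ → ℂ → ℙ ℂ (Fin m → ℂ)}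
    {g : ℂ → ℙ ℂ (Fin m → ℂ)} (h : TendstoCurve u l g) (hg : ∀ z w, g z = g w) {K : Set ℂ}
    (hK : IsCompact K) : ∃ a, ∀ᶠ k in l, Set.MapsTo (u k) K (dominantChart a) := by
  obtain ⟨a, ha, hmax⟩ := exists_rep_apply_ne_zero (g 0)
  have hnear : ∀ᶠ q : κ × ℂ in l ×ˢ 𝓝ˢ K, u q.1 q.2 ∈ dominantChart a :=
    hK.mem_prod_nhdsSet_of_forall fun z _ =>
      (h z).eventually_mem_dominantChart (hg 0 z ▸ ha) (hg 0 z ▸ hmax)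
  exact ⟨a, hnear.curry.mono fun k hk => hk.self_of_nhdsSet⟩

/-- Zaidenberg's version of Brody's lemma. The rescalings of nonconstant curves on discs of radius
`n + 1` converge along an ultrafilter, and none of them maps the unit disc into a single chart. -/
theorem exists_tendstoCurve_of_not_isHyperbolic {X : ℕ → Set (ℙ ℂ (Fin m → ℂ))}
    (hX : ∀ n, ¬ IsHyperbolic (X n)) :
    ∃ (u : ℕ → ℂ → ℙ ℂ (Fin m → ℂ)) (g : ℂ → ℙ ℂ (Fin m → ℂ)),
      (∀ n, HoloToProj (u n) ∧ ∀ z, u n z ∈ X n) ∧ HoloToProj g ∧ (¬ ∀ z w, g z = g w) ∧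
      TendstoCurve u (hyperfilter ℕ) g := by
  simp only [IsHyperbolic, not_forall, exists_prop] at hX
  choose f hf hfX z₀ w₀ hne using hX
  have hrescale (n : ℕ) := exists_rescaling (hf n) (fun h => hne n (h _ _)) n.cast_add_one_pos
  choose z s hexit hchart using hrescale
  have hu (n : ℕ) : HoloToProj fun w => f n (z n + s n * w) := (hf n).comp (by fun_prop)
  obtain ⟨g, hg, hlim⟩ := exists_tendstoCurve (l := hyperfilter ℕ) hu fun ζ => by
    refine ⟨1 / 4, by norm_num, ?_⟩
    have hlarge : ∀ᶠ n : ℕ in hyperfilter ℕ, ‖ζ‖ < n := Nat.hyperfilter_le_atTop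
      (tendsto_natCast_atTop_atTop.eventually_gt_atTop ‖ζ‖)
    filter_upwards [hlarge] with n hn
    exact hchart n ζ (mem_ball_zero_iff.2 (hn.trans (lt_add_one _)))
  refine ⟨_, g, fun n => ⟨hu n, fun w => hfX n _⟩, hg, fun hconst => ?_, hlim⟩
  obtain ⟨a, ha⟩ := hlim.eventually_mapsTo_dominantChart hconst (isCompact_closedBall 0 1)
  obtain ⟨n, hn⟩ := ha.exists
  obtain ⟨w, hw, hwa⟩ := hexit n a
  exact hwa (hn (ball_subset_closedBall hw))

end Limits

section Hurwitz

variable {κ : Type*} {l : Filter κ} [l.NeBot]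

theorem hurwitz {h : κ → ℂ → ℂ} {g : ℂ → ℂ} {z₀ : ℂ} (hg : AnalyticAt ℂ g z₀)
    (hd : ∀ᶠ q in l ×ˢ 𝓝 z₀, DifferentiableAt ℂ (h q.1) q.2)
    (hlim : ∀ᶠ w in 𝓝 z₀, Tendsto (fun q : κ × ℂ => h q.1 q.2) (l ×ˢ 𝓝 w) (𝓝 (g w)))
    (hgz : g z₀ = 0) (hne : ¬ ∀ᶠ w in 𝓝 z₀, g w = 0) : ∃ᶠ q in l ×ˢ 𝓝 z₀, h q.1 q.2 = 0 := by
  by_contra hh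
  have hg0 : ∀ᶠ w in 𝓝 z₀, w ≠ z₀ → g w ≠ 0 :=
    eventually_nhdsWithin_iff.1 (hg.eventually_eq_zero_or_eventually_ne_zero.resolve_left hne)
  obtain ⟨pk, hpk, pw, hpw, hprod⟩ := eventually_prod_iff.1 (hd.and (not_frequently.1 hh))
  obtain ⟨r, hr, hball⟩ := Metric.nhds_basis_closedBall.eventually_iff.1
    (hpw.and (hg0.and (hlim.and hg.eventually_analyticAt)))
  have hsphere {w : ℂ} (hw : w ∈ sphere z₀ r) : g w ≠ 0 :=
    (hball (sphere_subset_closedBall hw)).2.1 (ne_of_mem_sphere hw hr.ne')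
  obtain ⟨C, hC⟩ := (isCompact_sphere z₀ r).exists_bound_of_continuousOn (f := fun w => (g w)⁻¹)
    fun w hw => ((hball (sphere_subset_closedBall hw)).2.2.2.continuousAt.inv₀
      (hsphere hw)).continuousWithinAt
  have hbound : ∀ᶠ q : κ × ℂ in l ×ˢ 𝓝ˢ (sphere z₀ r), ‖(h q.1 q.2)⁻¹‖ < C + 1 :=
    (isCompact_sphere z₀ r).mem_prod_nhdsSet_of_forall fun w hw =>
      ((hball (sphere_subset_closedBall hw)).2.2.1.inv₀ (hsphere hw)).norm.eventually_lt_const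
        ((hC w hw).trans_lt (lt_add_one C))
  have hcenter : Tendsto (fun k => ‖h k z₀‖ * (C + 1)) l (𝓝 0) := by
    have hz₀ := hlim.self_of_nhds.comp (tendsto_id.prodMk (tendsto_const_nhds (x := z₀)))
    simpa [hgz] using hz₀.norm.mul_const (C + 1)
  obtain ⟨k, hk, hkC, hk1⟩ := (hpk.and (hbound.curry.and
    (hcenter.eventually_lt_const one_pos))).exists
  have hmax : ‖(h k z₀)⁻¹‖ ≤ C + 1 := by
    refine Complex.norm_le_of_forall_mem_frontier_norm_le (F := ℂ) (f := fun w => (h k w)⁻¹)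
      (isBounded_ball (x := z₀) (r := r)) ?_ (fun w hw => ?_) (subset_closure (mem_ball_self hr))
    · refine DifferentiableOn.diffContOnCl_ball (U := closedBall z₀ r) (fun w hw => ?_) subset_rfl
      have := hprod hk (hball hw).1
      exact (this.1.inv this.2).differentiableWithinAt
    · rw [frontier_ball z₀ hr.ne'] at hw
      exact (hkC.self_of_nhdsSet w hw).le
  have hkz : h k z₀ ≠ 0 := (hprod hk (hball (mem_closedBall_self hr.le)).1).2
  rw [norm_inv, inv_le_iff_one_le_mul₀' (norm_pos_iff.2 hkz)] at hmax
  exact hmax.not_gt hk1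

namespace TendstoCurve

variable {m : ℕ} {u : κ → ℂ → ℙ ℂ (Fin m → ℂ)} {g : ℂ → ℙ ℂ (Fin m → ℂ)}
  {P : MvPolynomial (Fin m) ℂ} {d : ℕ}

lemma frequently_eval_eq_zero (h : TendstoCurve u l g) (hu : ∀ k, HoloToProj (u k))
    (hg : HoloToProj g) (hP : P.IsHomogeneous d) {z₀ : ℂ} (hz₀ : eval (g z₀).rep P = 0)
    (hne : ¬ ∀ z, eval (g z).rep P = 0) :
    ∃ᶠ q : κ × ℂ in l ×ˢ 𝓝 z₀, eval (u q.1 q.2).rep P = 0 := by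
  obtain ⟨a, ha, -⟩ := exists_rep_apply_ne_zero (g z₀)
  have hchart := (h z₀).eventually_rep_apply_ne_zero ha
  have hgchart := hg.eventually_rep_apply_ne_zero ha
  have hlift := hurwitz (l := l) (h := fun k w => eval (affineLift a (u k w)) P)
    (hg.analyticAt_eval_affineLift ha P) ?_ ?_ ((eval_affineLift_eq_zero_iff hP ha).2 hz₀) ?_
  · exact (hlift.and_eventually hchart).mono fun q hq =>
      (eval_affineLift_eq_zero_iff hP hq.2).1 hq.1
  · exact hchart.mono fun q hq => ((hu q.1).analyticAt_eval_affineLift hq P).differentiableAt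
  · exact hgchart.mono fun w hw =>
      (P.continuous_eval.tendsto _).comp ((h w).tendsto_affineLift hw)
  · exact fun hzero => hne (hg.eval_eq_zero_of_eventually hP
      ((hzero.and hgchart).mono fun w hw => (eval_affineLift_eq_zero_iff hP hw.2).1 hw.1))

lemma forall_eval_eq_zero_or_forall_eval_ne_zero (h : TendstoCurve u l g)
    (hu : ∀ k, HoloToProj (u k)) (hg : HoloToProj g) (hP : P.IsHomogeneous d)
    (huP : ∀ᶠ k in l, ∀ z, eval (u k z).rep P ≠ 0) :
    (∀ z, eval (g z).rep P = 0) ∨ ∀ z, eval (g z).rep P ≠ 0 := by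
  by_contra! hcon
  obtain ⟨hne, z₀, hz₀⟩ := hcon
  exact h.frequently_eval_eq_zero hu hg hP hz₀ (not_forall.2 hne)
    ((huP.prod_inl (𝓝 z₀)).mono fun q hq => hq q.2)

end TendstoCurve

end Hurwitz

section Picard

lemma exists_eq_exp_of_forall_ne_zero {φ : ℂ → ℂ} (hd : Differentiable ℂ φ)
    (h0 : ∀ z, φ z ≠ 0) :
    ∃ G : ℂ → ℂ, Differentiable ℂ G ∧ ∀ z, φ z = Complex.exp (G z) := by
  obtain ⟨G, hG0, hG⟩ := (hd.deriv.div hd h0).isExactOn_univ.with_val_at 0 (Complex.log (φ 0))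
  have hGd (z : ℂ) : HasDerivAt G (deriv φ z / φ z) z := hG z trivial
  have hderiv (z : ℂ) : HasDerivAt (fun z => φ z * Complex.exp (-G z)) 0 z := by
    refine ((hd z).hasDerivAt.mul (hGd z).neg.cexp).congr_deriv ?_
    field_simp [h0 z]
    ring
  refine ⟨G, fun z => (hGd z).differentiableAt, fun z => ?_⟩
  have hconst : φ z * Complex.exp (-G z) = φ 0 * Complex.exp (-G 0) :=
    is_const_of_deriv_eq_zero (fun z => (hderiv z).differentiableAt) (fun z => (hderiv z).deriv) z 0
  rwa [hG0, Complex.exp_neg, Complex.exp_neg, Complex.exp_log (h0 0), mul_inv_cancel₀ (h0 0),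
    mul_inv_eq_one₀ (Complex.exp_ne_zero _)] at hconst

lemma mem_closure_pow_two_pow_eq_one {x : ℂ} (hx : ‖x‖ = 1) :
    x ∈ closure {ω : ℂ | ∃ k : ℕ, ω ^ 2 ^ k = 1} := by
  let e (t : ℝ) : ℂ := Complex.exp (2 * Real.pi * Complex.I * t)
  have he : Continuous e := by fun_prop
  let t : ℝ := x.arg / (2 * Real.pi) + 1
  have ht : 0 ≤ t := by
    have := x.neg_pi_lt_arg
    have hpi := Real.pi_pos
    rw [← sub_le_iff_le_add, zero_sub, le_div_iff₀ (by positivity)]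
    linarith
  have hxt : e t = x := by
    have harg : 2 * Real.pi * Complex.I * t = x.arg * Complex.I + 2 * Real.pi * Complex.I := by
      push_cast [t]
      field_simp
    have := x.norm_mul_exp_arg_mul_I
    rwa [hx, Complex.ofReal_one, one_mul, ← Complex.exp_periodic, ← harg] at this
  have hpow : Tendsto (fun k : ℕ => (2 : ℝ) ^ k) atTop atTop :=
    tendsto_pow_atTop_atTop_of_one_lt one_lt_two
  refine hxt ▸ mem_closure_of_tendsto
    ((he.tendsto t).comp ((tendsto_nat_floor_mul_div_atTop ht).comp hpow))
    (.of_forall fun k => ⟨k, ?_⟩)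
  simp only [e, Function.comp_apply, ← Complex.exp_nat_mul, Complex.exp_eq_one_iff]
  refine ⟨⌊t * 2 ^ k⌋₊, ?_⟩
  push_cast
  field_simp

variable {φ : ℂ → ℂ}

lemma apply_eq_apply_of_norm_ne_one (hd : Differentiable ℂ φ) (h : ∀ z, ‖φ z‖ ≠ 1) (z w : ℂ) :
    φ z = φ w := by
  have hbdd {ψ : ℂ → ℂ} (hψ : Differentiable ℂ ψ) (hle : ∀ x, ‖ψ x‖ ≤ 1) : ψ z = ψ w :=
    hψ.apply_eq_apply_of_bounded
      (isBounded_iff_forall_norm_le.2 ⟨1, Set.forall_mem_range.2 hle⟩) z w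
  by_cases hle : ∀ x, ‖φ x‖ ≤ 1
  · exact hbdd hd hle
  obtain ⟨b, hb⟩ := not_forall.1 hle
  have hge (x : ℂ) : 1 ≤ ‖φ x‖ := by
    by_contra! hx
    obtain ⟨y, hy⟩ :=
      mem_range_of_exists_le_of_exists_ge hd.continuous.norm ⟨x, hx.le⟩ ⟨b, (not_le.1 hb).le⟩
    exact h y hy
  have h0 (x : ℂ) : φ x ≠ 0 := norm_pos_iff.1 (one_pos.trans_le (hge x))
  exact inv_injective <| hbdd (hd.inv h0) fun x =>
    (norm_inv _).trans_le (inv_le_one_of_one_le₀ (hge x))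

lemma apply_eq_apply_of_pow_two_pow_ne_one (hd : Differentiable ℂ φ)
    (h : ∀ (k : ℕ) z, φ z ^ 2 ^ k ≠ 1) (z w : ℂ) : φ z = φ w := by
  rcases (hd.differentiableOn.analyticOnNhd isOpen_univ).is_constant_or_isOpenMap with
    ⟨c, hc⟩ | hopen
  · rw [hc, hc]
  refine apply_eq_apply_of_norm_ne_one hd (fun x hx => ?_) z w
  obtain ⟨_, ⟨y, rfl⟩, k, hy⟩ := mem_closure_iff.1 (mem_closure_pow_two_pow_eq_one hx) _
    hopen.isOpen_range (Set.mem_range_self x)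
  exact h k y hy

/-- The projective line without `∞ = [0 : 1]` and without the `n`-th roots of unity. -/
def rootsComplement (n : ℕ) : Set (ℙ ℂ (Fin 2 → ℂ)) :=
  {x | x.rep 0 ≠ 0 ∧ x.rep 1 ^ n ≠ x.rep 0 ^ n}

lemma not_isHyperbolic_rootsComplement (hd : Differentiable ℂ φ) (h0 : ∀ z, φ z ≠ 0)
    (h1 : ∀ z, φ z ≠ 1) (hne : ¬ ∀ z w, φ z = φ w) {n : ℕ} (hn : n ≠ 0) :
    ¬ IsHyperbolic (rootsComplement n) := by
  intro hyp
  obtain ⟨G, hG, hφ⟩ := exists_eq_exp_of_forall_ne_zero hd h0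
  let F (z : ℂ) : Fin 2 → ℂ := ![1, Complex.exp (G z / n)]
  have hF (z : ℂ) : F z ≠ 0 := fun h => one_ne_zero (congrFun h 0)
  have hpow (z : ℂ) : Complex.exp (G z / n) ^ n = φ z := by
    rw [← Complex.exp_nat_mul, mul_div_cancel₀ _ (Nat.cast_ne_zero.2 hn), hφ]
  have hFd : Differentiable ℂ F := differentiable_pi.2 <| Fin.forall_fin_two.2
    ⟨differentiable_const _, (hG.div_const _).cexp⟩
  refine hne fun z w => ?_
  have hzw := hyp (fun z => Projectivization.mk ℂ (F z) (hF z))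
    (fun z => ⟨Set.univ, isOpen_univ, trivial, F, hFd.differentiableOn, fun z _ => ⟨hF z, rfl⟩⟩)
    (fun z => ?_) z w
  · have := congrFun (congrArg (affineLift 0) hzw) 1
    simp only [affineLift_mk, F, Pi.smul_apply, Matrix.cons_val_zero, Matrix.cons_val_one, inv_one,
      one_smul] at this
    rw [← hpow, ← hpow, this]
  · obtain ⟨c, hc, hrep⟩ := exists_rep_mk_eq_smul (hF z)
    simp only [rootsComplement, Set.mem_ofPred_eq, hrep, F, Pi.smul_apply, Matrix.cons_val_zero,
      Matrix.cons_val_one, smul_eq_mul, mul_one, mul_pow, hpow]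
    exact ⟨hc, fun h => h1 z (mul_left_cancel₀ (pow_ne_zero n hc) (h.trans (mul_one _).symm))⟩

lemma eq_of_rep_zero_eq_zero {x y : ℙ ℂ (Fin 2 → ℂ)} (hx : x.rep 0 = 0) (hy : y.rep 0 = 0) :
    x = y := by
  obtain ⟨a, ha, -⟩ := exists_rep_apply_ne_zero y
  have ha1 : a = 1 := Fin.eq_one_of_ne_zero a fun h => ha (h ▸ hy)
  refine eq_of_smul_rep_eq_smul_rep (c := y.rep 1) (d := x.rep 1) (ha1 ▸ ha) (funext fun b => ?_)
  fin_cases b <;> simp [hx, hy, mul_comm]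

namespace TendstoCurve

variable {u : ℕ → ℂ → ℙ ℂ (Fin 2 → ℂ)} {g : ℂ → ℙ ℂ (Fin 2 → ℂ)}

lemma forall_affineLift_eq_or_forall_affineLift_ne (h : TendstoCurve u (hyperfilter ℕ) g)
    (hu : ∀ n, HoloToProj (u n) ∧ ∀ z, u n z ∈ rootsComplement (2 ^ n)) (hg : HoloToProj g)
    (h0 : ∀ z, (g z).rep 0 ≠ 0) {ζ : ℂ} {k : ℕ} (hζ : ζ ^ 2 ^ k = 1) :
    (∀ z, affineLift 0 (g z) 1 = ζ) ∨ ∀ z, affineLift 0 (g z) 1 ≠ ζ := by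
  have hP : (X 1 - C ζ * X 0 : MvPolynomial (Fin 2) ℂ).IsHomogeneous 1 :=
    (isHomogeneous_X ℂ 1).sub (by simpa using (isHomogeneous_C _ ζ).mul (isHomogeneous_X ℂ 0))
  have hiff (z : ℂ) : eval (g z).rep (X 1 - C ζ * X 0) = 0 ↔ affineLift 0 (g z) 1 = ζ := by
    rw [affineLift, Pi.smul_apply, smul_eq_mul, inv_mul_eq_iff_eq_mul₀ (h0 z), mul_comm]
    simp [sub_eq_zero]
  simp only [← hiff, ne_eq]
  refine h.forall_eval_eq_zero_or_forall_eval_ne_zero (fun n => (hu n).1) hg hP ?_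
  filter_upwards [Nat.hyperfilter_le_atTop (eventually_ge_atTop k)] with n hn z hz
  simp only [map_sub, map_mul, eval_X, eval_C, sub_eq_zero] at hz
  have hζn : ζ ^ 2 ^ n = 1 := by
    rw [← Nat.add_sub_cancel' hn, pow_add, pow_mul, hζ, one_pow]
  exact ((hu n).2 z).2 (by rw [hz, mul_pow, hζn, one_mul])

lemma apply_eq_apply_of_mem_rootsComplement (h : TendstoCurve u (hyperfilter ℕ) g)
    (hu : ∀ n, HoloToProj (u n) ∧ ∀ z, u n z ∈ rootsComplement (2 ^ n)) (hg : HoloToProj g)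
    (z w : ℂ) : g z = g w := by
  rcases h.forall_eval_eq_zero_or_forall_eval_ne_zero (fun n => (hu n).1) hg
    (isHomogeneous_X ℂ 0) (.of_forall fun n z => by simpa using ((hu n).2 z).1) with h0 | h0
  · simp only [eval_X] at h0
    exact eq_of_rep_zero_eq_zero (h0 z) (h0 w)
  simp only [eval_X] at h0
  suffices hconst : affineLift 0 (g z) 1 = affineLift 0 (g w) 1 by
    refine eq_of_affineLift_eq_smul (b := 0) (c := 1) (h0 z) ?_
    rw [one_smul]
    refine funext <| Fin.forall_fin_two.2 ⟨?_, hconst⟩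
    rw [affineLift_apply_self (h0 z), affineLift_apply_self (h0 w)]
  have hd : Differentiable ℂ fun z => affineLift 0 (g z) 1 := fun z =>
    differentiableAt_pi.1 (hg.differentiableAt_affineLift (h0 z)) 1
  by_cases hall : ∃ ζ, ∀ z, affineLift 0 (g z) 1 = ζ
  · obtain ⟨ζ, hζ⟩ := hall
    rw [hζ, hζ]
  · exact apply_eq_apply_of_pow_two_pow_ne_one hd (fun k x hx =>
      (h.forall_affineLift_eq_or_forall_affineLift_ne hu hg h0 hx).resolve_left
        (fun h => hall ⟨_, h⟩) x rfl) z w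

end TendstoCurve

/-- If `φ` omits `0` and `1`, its `2 ^ n`-th root omits the `2 ^ n`-th roots of unity. A limit of
rescalings of these roots omits them all, hence omits the unit circle. -/
lemma picard_zero_one (hd : Differentiable ℂ φ) (h0 : ∀ z, φ z ≠ 0) (h1 : ∀ z, φ z ≠ 1) (z w : ℂ) :
    φ z = φ w := by
  by_contra hne
  obtain ⟨u, g, hu, hg, hgne, hlim⟩ := exists_tendstoCurve_of_not_isHyperbolic fun n =>
    not_isHyperbolic_rootsComplement hd h0 h1 (fun h => hne (h z w)) (pow_ne_zero n two_ne_zero)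
  exact hgne (hlim.apply_eq_apply_of_mem_rootsComplement hu hg)

theorem picard {a b : ℂ} (hab : a ≠ b) (hd : Differentiable ℂ φ) (ha : ∀ z, φ z ≠ a)
    (hb : ∀ z, φ z ≠ b) (z w : ℂ) : φ z = φ w := by
  have hba : b - a ≠ 0 := sub_ne_zero.2 hab.symm
  have := picard_zero_one (φ := fun z => (φ z - a) / (b - a)) ((hd.sub_const a).div_const _)
    (fun z => div_ne_zero (sub_ne_zero.2 (ha z)) hba)
    (fun z h => hb z (sub_left_injective ((div_eq_one_iff_eq hba).1 h))) z w
  exact sub_left_injective ((div_left_inj' hba).1 this)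

end Picard

section Lines

variable {m : ℕ}

lemma IsHyperbolic.mono {X Y : Set (ℙ ℂ (Fin m → ℂ))} (hY : IsHyperbolic Y) (h : X ⊆ Y) :
    IsHyperbolic X := fun f hf hfX => hY f hf fun z => h (hfX z)

lemma HoloToProj.differentiable_div {f : ℂ → ℙ ℂ (Fin m → ℂ)} (hf : HoloToProj f)
    (a b : (Fin m → ℂ) →ₗ[ℂ] ℂ) (hb : ∀ z, b (f z).rep ≠ 0) :
    Differentiable ℂ fun z => a (f z).rep / b (f z).rep := by
  intro z
  obtain ⟨c, hc, -⟩ := exists_rep_apply_ne_zero (f z)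
  have hd (l : (Fin m → ℂ) →ₗ[ℂ] ℂ) : DifferentiableAt ℂ (fun w => l (affineLift c (f w))) z :=
    l.toContinuousLinearMap.differentiableAt.comp z (hf.differentiableAt_affineLift hc)
  have hbz : b (affineLift c (f z)) ≠ 0 := by
    rw [affineLift, map_smul]
    exact smul_ne_zero (inv_ne_zero hc) (hb z)
  refine ((hd a).div (hd b) hbz).congr_of_eventuallyEq ?_
  filter_upwards [hf.eventually_rep_apply_ne_zero hc] with w hw
  simp only [Pi.div_apply, affineLift, map_smul, smul_eq_mul]
  rw [mul_div_mul_left _ _ (inv_ne_zero hw)]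

lemma exists_linearMap_eval_eq {κ R : Type*} [CommSemiring R] {P : MvPolynomial κ R}
    (hP : P.IsHomogeneous 1) : ∃ l : (κ → R) →ₗ[R] R, ∀ v, eval v P = l v := by
  have hspan : P ∈ Submodule.span R (Set.range (X : κ → MvPolynomial κ R)) := by
    rwa [← homogeneousSubmodule_one_eq_span_X]
  clear hP
  induction hspan using Submodule.span_induction with
  | mem _ hx =>
    obtain ⟨i, rfl⟩ := hx
    exact ⟨LinearMap.proj i, fun v => by simp⟩
  | zero => exact ⟨0, fun v => by simp⟩
  | add _ _ _ _ hx hy =>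
    obtain ⟨⟨l, hl⟩, ⟨l', hl'⟩⟩ := hx, hy
    exact ⟨l + l', fun v => by simp [hl, hl']⟩
  | smul c _ _ hx =>
    obtain ⟨l, hl⟩ := hx
    exact ⟨c • l, fun v => by simp [hl, smul_eval]⟩

section Submodule

variable {W : Submodule ℂ (Fin m → ℂ)} {x y : ℙ ℂ (Fin m → ℂ)} {a b c : (Fin m → ℂ) →ₗ[ℂ] ℂ}

lemma eq_of_apply_mul_apply_eq (hab : ∀ v ∈ W, a v = 0 → b v = 0 → v = 0)
    (hx : x.rep ∈ W) (hy : y.rep ∈ W) (hby : b y.rep ≠ 0)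
    (h : a x.rep * b y.rep = a y.rep * b x.rep) : x = y := by
  refine eq_of_smul_rep_eq_smul_rep (c := b y.rep) (d := b x.rep) hby (sub_eq_zero.1 ?_)
  refine hab _ (W.sub_mem (W.smul_mem _ hx) (W.smul_mem _ hy)) ?_ ?_
  · simp only [map_sub, map_smul, smul_eq_mul]
    linear_combination h
  · simp only [map_sub, map_smul, smul_eq_mul]
    ring

/-- A projective line minus three points: in the coordinate `a / b`, which omits `0` and `∞`, the
zero of `c` is a third omitted value. -/
lemma isHyperbolic_line_sdiff (hab : ∀ v ∈ W, a v = 0 → b v = 0 → v = 0)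
    (hac : ∀ v ∈ W, a v = 0 → c v = 0 → v = 0) (hbc : ∀ v ∈ W, b v = 0 → c v = 0 → v = 0) :
    IsHyperbolic {x : ℙ ℂ (Fin m → ℂ) |
      x.rep ∈ W ∧ a x.rep ≠ 0 ∧ b x.rep ≠ 0 ∧ c x.rep ≠ 0} := by
  intro f hf hmem z w
  obtain ⟨hxW, hax, hbx, -⟩ := hmem z
  obtain ⟨hyW, hay, hby, -⟩ := hmem w
  set x := (f z).rep
  set y := (f w).rep
  refine eq_of_apply_mul_apply_eq hab hxW hyW hby (sub_eq_zero.1 (not_not.1 fun hD => ?_))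
  set D := a x * b y - a y * b x with hDdef
  set α := b y * c x - b x * c y
  set β := a x * c y - a y * c x
  have hα : α ≠ 0 := fun h => hD <| by
    have := hbc (b y • x - b x • y) (W.sub_mem (W.smul_mem _ hxW) (W.smul_mem _ hyW))
      (by simp [mul_comm]) (by simpa using h)
    simpa [hDdef, mul_comm] using congrArg a this
  have hβ : β ≠ 0 := fun h => hD <| by
    have := hac (a x • y - a y • x) (W.sub_mem (W.smul_mem _ hyW) (W.smul_mem _ hxW))
      (by simp [mul_comm]) (by simpa using h)
    simpa [hDdef] using congrArg b this
  have hc : ∀ v ∈ W, D * c v = α * a v + β * b v := fun v hv => by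
    have := hab (D • v - ((a v * b y - a y * b v) • x + (a x * b v - a v * b x) • y))
      (W.sub_mem (W.smul_mem _ hv) (W.add_mem (W.smul_mem _ hxW) (W.smul_mem _ hyW)))
      (by simp only [hDdef, map_sub, map_add, map_smul, smul_eq_mul]; ring)
      (by simp only [hDdef, map_sub, map_add, map_smul, smul_eq_mul]; ring)
    have := congrArg c (sub_eq_zero.1 this)
    simp only [map_add, map_smul, smul_eq_mul] at this
    linear_combination this
  have hratio := picard (div_ne_zero (neg_ne_zero.2 hβ) hα).symm
    (hf.differentiable_div a b fun z => (hmem z).2.2.1)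
    (fun z => div_ne_zero (hmem z).2.1 (hmem z).2.2.1) (fun z hz => ?_) z w
  · rw [div_eq_div_iff hbx hby] at hratio
    exact hD (sub_eq_zero.2 hratio)
  · obtain ⟨hW, -, hb, hcz⟩ := hmem z
    rw [div_eq_div_iff hb hα] at hz
    refine mul_ne_zero hD hcz ((hc _ hW).trans ?_)
    linear_combination hz

end Submodule

end Lines

section Configurations

variable {m : ℕ} {ι : Type*}

/-- General position of the hyperplanes `p i = 0`: no four of them have a common point. -/
def NoQuadruplePoint (p : ι → MvPolynomial (Fin m) ℂ) : Prop :=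
  ∀ i j k l : ι, i ≠ j → i ≠ k → i ≠ l → j ≠ k → j ≠ l → k ≠ l → ∀ v : Fin m → ℂ, v ≠ 0 →
    ¬ (eval v (p i) = 0 ∧ eval v (p j) = 0 ∧ eval v (p k) = 0 ∧ eval v (p l) = 0)

variable [Fintype ι] {p : ι → MvPolynomial (Fin m) ℂ}

lemma exists_three_notMem (hι : 6 ≤ Fintype.card ι) (i j k : ι) :
    ∃ a b c : ι, a ≠ b ∧ a ≠ c ∧ b ≠ c ∧ a ∉ ({i, j, k} : Set ι) ∧ b ∉ ({i, j, k} : Set ι) ∧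
      c ∉ ({i, j, k} : Set ι) := by
  classical
  have hcard : 2 < ({i, j, k} : Finset ι)ᶜ.card := by
    have := Finset.card_add_card_compl ({i, j, k} : Finset ι)
    have := Finset.card_le_three (a := i) (b := j) (c := k)
    lia
  obtain ⟨a, ha, b, hb, c, hc, hab, hac, hbc⟩ := Finset.two_lt_card.1 hcard
  exact ⟨a, b, c, hab, hac, hbc, by simpa using ha, by simpa using hb, by simpa using hc⟩

namespace NoQuadruplePoint

lemma isHyperbolic_line_sdiff (hgen : NoQuadruplePoint p) (hp : ∀ i, (p i).IsHomogeneous 1)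
    (hι : 6 ≤ Fintype.card ι) {i j : ι} (hij : i ≠ j) (k : ι) :
    IsHyperbolic {x : ℙ ℂ (Fin m → ℂ) | eval x.rep (p i) = 0 ∧ eval x.rep (p j) = 0 ∧
      ∀ l ∉ ({i, j, k} : Set ι), eval x.rep (p l) ≠ 0} := by
  choose L hL using fun i => exists_linearMap_eval_eq (hp i)
  obtain ⟨a, b, c, hab, hac, hbc, ha, hb, hc⟩ := exists_three_notMem hι i j k
  have hinj {l l' : ι} (hl : l ∉ ({i, j, k} : Set ι)) (hl' : l' ∉ ({i, j, k} : Set ι))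
      (hll' : l ≠ l') : ∀ v ∈ (L i).ker ⊓ (L j).ker, L l v = 0 → L l' v = 0 → v = 0 := by
    intro v hv h h'
    simp only [Set.mem_insert_iff, Set.mem_singleton_iff, not_or] at hl hl'
    refine not_not.1 fun hv0 => hgen i j l l' hij (Ne.symm hl.1) (Ne.symm hl'.1)
      (Ne.symm hl.2.1) (Ne.symm hl'.2.1) hll' v hv0 ?_
    simp only [hL]
    exact ⟨hv.1, hv.2, h, h'⟩
  refine (_root_.isHyperbolic_line_sdiff (hinj ha hb hab) (hinj ha hc hac)
    (hinj hb hc hbc)).mono ?_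
  rintro x ⟨hi, hj, hne⟩
  simp only [hL] at hi hj hne
  exact ⟨⟨hi, hj⟩, hne a ha, hne b hb, hne c hc⟩

lemma eq_of_eval_eq_zero (hgen : NoQuadruplePoint p) (hp : ∀ i, (p i).IsHomogeneous 1)
    (hι : 4 ≤ Fintype.card ι) {i j k : ι} (hij : i ≠ j) (hik : i ≠ k) (hjk : j ≠ k)
    {x y : ℙ ℂ (Fin m → ℂ)}
    (hx : eval x.rep (p i) = 0 ∧ eval x.rep (p j) = 0 ∧ eval x.rep (p k) = 0)
    (hy : eval y.rep (p i) = 0 ∧ eval y.rep (p j) = 0 ∧ eval y.rep (p k) = 0) : x = y := by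
  classical
  obtain ⟨l, -, hl⟩ := Finset.exists_mem_notMem_of_card_lt_card
    ((Finset.card_le_three (a := i) (b := j) (c := k)).trans_lt hι)
  simp only [Finset.mem_insert, Finset.mem_singleton, not_or] at hl
  have hquad := hgen i j k l hij hik (Ne.symm hl.1) hjk (Ne.symm hl.2.1) (Ne.symm hl.2.2)
  choose L hL using fun i => exists_linearMap_eval_eq (hp i)
  simp only [hL] at hx hy hquad
  refine eq_of_apply_mul_apply_eq (W := (L i).ker ⊓ (L j).ker) (a := L k) (b := L l)
    (fun v hv hk hl => not_not.1 fun hv0 => hquad v hv0 ⟨hv.1, hv.2, hk, hl⟩)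
    ⟨hx.1, hx.2.1⟩ ⟨hy.1, hy.2.1⟩ (fun h => hquad _ y.rep_nonzero ⟨hy.1, hy.2.1, hy.2.2, h⟩) ?_
  rw [hx.2.2, hy.2.2, zero_mul, zero_mul]

end NoQuadruplePoint

end Configurations

section Deformation

variable {m d : ℕ} {ι κ : Type*} {p : ι → MvPolynomial (Fin m) ℂ} {q s : MvPolynomial (Fin m) ℂ}
  {Δ : Finset (Sym2 ι)} {a b i j : ι}

/-- The hypersurface `s = 0` contains no triple point of the configuration `p`. -/
def AvoidsTriplePoints (p : ι → MvPolynomial (Fin m) ℂ) (s : MvPolynomial (Fin m) ℂ) : Prop :=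
  ∀ v : Fin m → ℂ, v ≠ 0 →
    (∃ i j l : ι, i ≠ j ∧ i ≠ l ∧ j ≠ l ∧ eval v (p i) = 0 ∧ eval v (p j) = 0 ∧ eval v (p l) = 0) →
    eval v s ≠ 0

/-- The union of the double lines in `Δ`, where `s(i, j)` encodes the line `p i = p j = 0`. -/
def doubleLines (p : ι → MvPolynomial (Fin m) ℂ) (Δ : Finset (Sym2 ι)) :
    Set (ℙ ℂ (Fin m → ℂ)) := {x | ∃ e ∈ Δ, ∀ a ∈ e, eval x.rep (p a) = 0}

/-- The complement `P_i \ (⋃_{j ≠ i} P_j \ (Δ ∩ S))`, where `P_i = (p i = 0)` and `S = (s = 0)`. -/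
def planeComplement (p : ι → MvPolynomial (Fin m) ℂ) (Δ : Finset (Sym2 ι))
    (s : MvPolynomial (Fin m) ℂ) (i : ι) : Set (ℙ ℂ (Fin m → ℂ)) :=
  {x | eval x.rep (p i) = 0 ∧ ∀ j, j ≠ i → eval x.rep (p j) = 0 →
    x ∈ doubleLines p Δ ∧ eval x.rep s = 0}

lemma TendstoProj.mem_doubleLines_of_frequently {l : Filter κ} {u : κ → ℙ ℂ (Fin m → ℂ)}
    {x : ℙ ℂ (Fin m → ℂ)} (h : TendstoProj u l x) (hp : ∀ i, (p i).IsHomogeneous 1)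
    (hu : ∃ᶠ k in l, u k ∈ doubleLines p Δ) : x ∈ doubleLines p Δ := by
  by_contra hx
  refine hu ?_
  simp only [doubleLines, Set.mem_ofPred_eq, not_exists, not_and] at hx ⊢
  refine (eventually_all_finset Δ).2 fun e he => ?_
  obtain ⟨c, hc, hne⟩ := not_forall₂.1 (hx e he)
  filter_upwards [not_frequently.1 (mt (h.eval_eq_zero_of_frequently (hp c)) hne)] with k hk hek
  exact hk (hek c hc)

lemma eval_eq_mul_of_mem_planeComplement {ε : ℂ} {x : ℙ ℂ (Fin m → ℂ)}
    (hx : x ∈ planeComplement p Δ (q - C ε * s) i) (hji : j ≠ i) (hj : eval x.rep (p j) = 0) :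
    eval x.rep q = ε * eval x.rep s := by
  simpa [sub_eq_zero] using (hx.2 j hji hj).2

namespace TendstoCurve

variable {l : Filter κ} [l.NeBot] {u : κ → ℂ → ℙ ℂ (Fin m → ℂ)} {g : ℂ → ℙ ℂ (Fin m → ℂ)}
  {ε : κ → ℂ} {z : ℂ}

lemma eval_eq_zero_of_mem_planeComplement (h : TendstoCurve u l g)
    (hp : ∀ i, (p i).IsHomogeneous 1)
    (hu : ∀ k z, u k z ∈ planeComplement p Δ (q - C (ε k) * s) i) (z : ℂ) :
    eval (g z).rep (p i) = 0 :=
  (h z).eval_eq_zero_of_frequently (hp i) (Frequently.of_forall fun q => (hu q.1 q.2).1)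

lemma eval_eq_zero_of_tendsto_zero (h : TendstoCurve u l g) (hg : HoloToProj g)
    (hp : ∀ i, (p i).IsHomogeneous 1) (hqd : q.IsHomogeneous d) (hsd : s.IsHomogeneous d)
    (hu : ∀ k, HoloToProj (u k) ∧ ∀ z, u k z ∈ planeComplement p Δ (q - C (ε k) * s) i)
    (hε : Tendsto ε l (𝓝 0)) (hji : j ≠ i) (hne : ¬ ∀ z, eval (g z).rep (p j) = 0)
    (hz : eval (g z).rep (p j) = 0) : eval (g z).rep q = 0 := by
  have hfreq := h.frequently_eval_eq_zero (fun k => (hu k).1) hg (hp j) hz hne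
  exact (h z).eval_eq_zero_of_frequently_eq_mul hqd hsd (hε.comp tendsto_fst)
    (hfreq.mono fun q hq => eval_eq_mul_of_mem_planeComplement ((hu q.1).2 q.2) hji hq)

end TendstoCurve

variable [DecidableEq ι]

lemma mem_doubleLines_of_mem_planeComplement_insert (hab : a ≠ b)
    (hq : ∀ v, eval v q = 0 ↔ ∃ l, l ≠ a ∧ l ≠ b ∧ eval v (p l) = 0) (hs : AvoidsTriplePoints p s)
    {ε : ℂ} (hε : ε ≠ 0) {x : ℙ ℂ (Fin m → ℂ)}
    (hx : x ∈ planeComplement p (insert s(a, b) Δ) (q - C ε * s) i) (hji : j ≠ i)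
    (hne : s(i, j) ≠ s(a, b)) (hj : eval x.rep (p j) = 0) :
    x ∈ doubleLines p Δ ∧ eval x.rep s = 0 := by
  obtain ⟨l, hla, hlb, hl⟩ : ∃ l, l ≠ a ∧ l ≠ b ∧ eval x.rep (p l) = 0 := by
    by_cases hi : i ≠ a ∧ i ≠ b
    · exact ⟨i, hi.1, hi.2, hx.1⟩
    · refine ⟨j, ?_, ?_, hj⟩ <;> grind [Sym2.eq_iff]
  have hsx : eval x.rep s = 0 := by
    have := eval_eq_mul_of_mem_planeComplement hx hji hj
    rw [(hq _).2 ⟨l, hla, hlb, hl⟩] at this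
    exact (mul_eq_zero.1 this.symm).resolve_left hε
  obtain ⟨e, he, hex⟩ := (hx.2 j hji hj).1
  rcases Finset.mem_insert.1 he with rfl | he
  · exact absurd hsx (hs _ x.rep_nonzero ⟨a, b, l, hab, hla.symm, hlb.symm,
      hex a (Sym2.mem_mk_left a b), hex b (Sym2.mem_mk_right a b), hl⟩)
  · exact ⟨⟨e, he, hex⟩, hsx⟩

namespace TendstoCurve

variable {l : Filter κ} [l.NeBot] {u : κ → ℂ → ℙ ℂ (Fin m → ℂ)} {g : ℂ → ℙ ℂ (Fin m → ℂ)}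
  {ε : κ → ℂ} {z : ℂ}

lemma mem_doubleLines_and_eval_eq_zero (h : TendstoCurve u l g) (hg : HoloToProj g)
    (hp : ∀ i, (p i).IsHomogeneous 1) (hsd : s.IsHomogeneous d) (hab : a ≠ b)
    (hq : ∀ v, eval v q = 0 ↔ ∃ l, l ≠ a ∧ l ≠ b ∧ eval v (p l) = 0) (hs : AvoidsTriplePoints p s)
    (hu : ∀ k, HoloToProj (u k) ∧
      ∀ z, u k z ∈ planeComplement p (insert s(a, b) Δ) (q - C (ε k) * s) i)
    (hε : ∀ k, ε k ≠ 0) (hji : j ≠ i) (hij : s(i, j) ≠ s(a, b))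
    (hne : ¬ ∀ z, eval (g z).rep (p j) = 0) (hz : eval (g z).rep (p j) = 0) :
    g z ∈ doubleLines p Δ ∧ eval (g z).rep s = 0 := by
  have hfreq := (h.frequently_eval_eq_zero (fun k => (hu k).1) hg (hp j) hz hne).mono fun k hk =>
    mem_doubleLines_of_mem_planeComplement_insert hab hq hs (hε k.1) ((hu k.1).2 k.2) hji hij hk
  exact ⟨(h z).mem_doubleLines_of_frequently hp (hfreq.mono fun _ hk => hk.1),
    (h z).eval_eq_zero_of_frequently hsd (hfreq.mono fun _ hk => hk.2)⟩

lemma apply_eq_apply_of_forall_mem_line [Fintype ι] (hι : 6 ≤ Fintype.card ι)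
    (h : TendstoCurve u l g) (hg : HoloToProj g) (hp : ∀ i, (p i).IsHomogeneous 1)
    (hgen : NoQuadruplePoint p) (hsd : s.IsHomogeneous d) (hab : a ≠ b)
    (hq : ∀ v, eval v q = 0 ↔ ∃ l, l ≠ a ∧ l ≠ b ∧ eval v (p l) = 0) (hs : AvoidsTriplePoints p s)
    (hu : ∀ k, HoloToProj (u k) ∧
      ∀ z, u k z ∈ planeComplement p (insert s(a, b) Δ) (q - C (ε k) * s) i)
    (hε : ∀ k, ε k ≠ 0) (hji : j ≠ i) (hj : ∀ z, eval (g z).rep (p j) = 0) (z w : ℂ) :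
    g z = g w := by
  have hi := h.eval_eq_zero_of_mem_planeComplement hp fun k => (hu k).2
  obtain ⟨t, ht⟩ : ∃ t, ∀ c, s(i, c) = s(a, b) → c = t :=
    ⟨if i = a then b else a, fun c hc => by grind [Sym2.eq_iff]⟩
  by_cases htriple : ∃ c, c ≠ i ∧ c ≠ j ∧ ∀ z, eval (g z).rep (p c) = 0
  · obtain ⟨c, hci, hcj, hc⟩ := htriple
    exact hgen.eq_of_eval_eq_zero hp (le_trans (by norm_num) hι) hji.symm hci.symm hcj.symm
      ⟨hi z, hj z, hc z⟩ ⟨hi w, hj w, hc w⟩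
  refine hgen.isHyperbolic_line_sdiff hp hι hji.symm t g hg (fun z => ⟨hi z, hj z, ?_⟩) z w
  intro c hc hcz
  simp only [Set.mem_insert_iff, Set.mem_singleton_iff, not_or] at hc
  obtain ⟨hci, hcj, hct⟩ := hc
  have hsz := (h.mem_doubleLines_and_eval_eq_zero hg hp hsd hab hq hs hu hε hci
    (mt (ht c) hct) (fun hall => htriple ⟨c, hci, hcj, hall⟩) hcz).2
  exact hs _ (g z).rep_nonzero
    ⟨i, j, c, hji.symm, Ne.symm hci, Ne.symm hcj, hi z, hj z, hcz⟩ hsz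

lemma mem_planeComplement (h : TendstoCurve u l g) (hg : HoloToProj g)
    (hp : ∀ i, (p i).IsHomogeneous 1) (hqd : q.IsHomogeneous d) (hsd : s.IsHomogeneous d)
    (hab : a ≠ b) (hq : ∀ v, eval v q = 0 ↔ ∃ l, l ≠ a ∧ l ≠ b ∧ eval v (p l) = 0)
    (hs : AvoidsTriplePoints p s)
    (hu : ∀ k, HoloToProj (u k) ∧
      ∀ z, u k z ∈ planeComplement p (insert s(a, b) Δ) (q - C (ε k) * s) i)
    (hε : ∀ k, ε k ≠ 0) (hε' : Tendsto ε l (𝓝 0))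
    (hne : ∀ j, j ≠ i → ¬ ∀ z, eval (g z).rep (p j) = 0) (z : ℂ) :
    g z ∈ planeComplement p Δ s i := by
  have hi := h.eval_eq_zero_of_mem_planeComplement hp fun k => (hu k).2
  have hlim {j : ι} (hji : j ≠ i) (hij : s(i, j) ≠ s(a, b)) (hj : eval (g z).rep (p j) = 0) :=
    h.mem_doubleLines_and_eval_eq_zero hg hp hsd hab hq hs hu hε hji hij (hne j hji) hj
  refine ⟨hi z, fun j hji hj => hlim hji (fun hij => ?_) hj⟩
  have hqz := h.eval_eq_zero_of_tendsto_zero hg hp hqd hsd hu hε' hji (hne j hji) hj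
  obtain ⟨c, hca, hcb, hc⟩ := (hq _).1 hqz
  obtain ⟨hci, hcj, hic⟩ : c ≠ i ∧ c ≠ j ∧ s(i, c) ≠ s(a, b) := by grind [Sym2.eq_iff]
  exact hs _ (g z).rep_nonzero ⟨i, j, c, hji.symm, hci.symm, hcj.symm, hi z, hj, hc⟩
    (hlim hci hic hc).2

end TendstoCurve

end Deformation

theorem deformation_lemma_general {m d : ℕ} {ι : Type*} [Fintype ι] [DecidableEq ι]
    (hι : 6 ≤ Fintype.card ι) {p : ι → MvPolynomial (Fin m) ℂ} (hp : ∀ i, (p i).IsHomogeneous 1)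
    (hgen : NoQuadruplePoint p) {Δ : Finset (Sym2 ι)} {a b : ι} (hab : a ≠ b)
    {q s : MvPolynomial (Fin m) ℂ} (hqd : q.IsHomogeneous d) (hsd : s.IsHomogeneous d)
    (hq : ∀ v, eval v q = 0 ↔ ∃ l, l ≠ a ∧ l ≠ b ∧ eval v (p l) = 0)
    (hs : AvoidsTriplePoints p s) (hyp : ∀ i, IsHyperbolic (planeComplement p Δ s i)) :
    ∀ᶠ ε in 𝓝[≠] (0 : ℂ), ∀ i,
      IsHyperbolic (planeComplement p (insert s(a, b) Δ) (q - C ε * s) i) := by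
  by_contra hcon
  simp only [not_eventually, not_forall, frequently_exists] at hcon
  obtain ⟨i, hcon⟩ := hcon
  obtain ⟨ε, hε, hεX⟩ :=
    exists_seq_forall_of_frequently (hcon.and_eventually eventually_mem_nhdsWithin)
  obtain ⟨u, g, hu, hg, hgne, hlim⟩ :=
    exists_tendstoCurve_of_not_isHyperbolic fun n => (hεX n).1
  have hε0 (n : ℕ) : ε n ≠ 0 := (hεX n).2
  refine hgne (hyp i g hg (hlim.mem_planeComplement hg hp hqd hsd hab hq hs hu hε0
    ((hε.mono_right nhdsWithin_le_nhds).mono_left Nat.hyperfilter_le_atTop) fun j hji hj => ?_))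
  exact hgne (hlim.apply_eq_apply_of_forall_mem_line hι hg hp hgen hsd hab hq hs hu hε0 hji hj)

lemma eval_prod_sigma_eq_zero_iff {m : ℕ} (p : Fin 6 → MvPolynomial (Fin m) ℂ)
    (σ : Equiv.Perm (Fin 6)) (v : Fin m → ℂ) :
    eval v (p (σ 2) * p (σ 3) * p (σ 4) ^ 2 * p (σ 5) ^ 2) = 0 ↔
      ∃ l, l ≠ σ 0 ∧ l ≠ σ 1 ∧ eval v (p l) = 0 := by
  rw [← σ.exists_congr_right]
  simp [Fin.exists_fin_succ, or_assoc]

/-- **Lemma (inductive step).**  Let `Δ` be a collection of `k` double lines,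
`D = P (σ 0) ∩ P (σ 1)` an extra one.  Assume the sextic `(sk = 0)` is such that all the
complements `P i \ (⋃_{j ≠ i} P j \ (Δ ∩ S_k))` are hyperbolic.  Then for all
sufficiently small `ε ≠ 0`, with `S_{k+1} = (p (σ 2) p (σ 3) p (σ 4)² p (σ 5)² = ε sk)`,
all the complements `P i \ (⋃_{j ≠ i} P j \ ((Δ ∪ D) ∩ S_{k+1}))` are hyperbolic. -/
theorem deformation_lemma
    (p : Fin 6 → MvPolynomial (Fin 4) ℂ)
    (hp_lin : ∀ i, (p i).IsHomogeneous 1)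
    (hp0 : ∀ i, p i ≠ 0)
    (hp_distinct : ∀ i j, i ≠ j → ¬ ∃ c : ℂ, p i = c • p j)
    -- general position: no quadruple point
    (hgen : ∀ i j k l : Fin 6, i ≠ j → i ≠ k → i ≠ l → j ≠ k → j ≠ l → k ≠ l →
      ∀ v : Fin 4 → ℂ, v ≠ 0 →
        ¬ (eval v (p i) = 0 ∧ eval v (p j) = 0 ∧ eval v (p k) = 0 ∧ eval v (p l) = 0))
    -- the collection `Δ` of `k` double lines and the extra double line `D`
    (k : ℕ) (Δ : Finset (Sym2 (Fin 6)))
    (hΔ_card : Δ.card = k)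
    (hΔ_lines : ∀ e ∈ Δ, ¬ e.IsDiag)
    (σ : Equiv.Perm (Fin 6))
    (hD_new : s(σ 0, σ 1) ∉ Δ)
    -- the sextic `S_k = (sk = 0)`, in general position with respect to the planes
    (sk : MvPolynomial (Fin 4) ℂ)
    (hsk_hom : sk.IsHomogeneous 6) (hsk0 : sk ≠ 0)
    (hsk_gen : ∀ v : Fin 4 → ℂ, v ≠ 0 →
      (∃ i j l : Fin 6, i ≠ j ∧ i ≠ l ∧ j ≠ l ∧
        eval v (p i) = 0 ∧ eval v (p j) = 0 ∧ eval v (p l) = 0) →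
      eval v sk ≠ 0)
    -- hypothesis: the complements `P i \ (⋃_{j ≠ i} P j \ (Δ ∩ S_k))` are hyperbolic
    (hhyp : ∀ i : Fin 6, ∀ f : ℂ → Projectivization ℂ (Fin 4 → ℂ), HoloToProj f →
      (∀ z : ℂ, eval (f z).rep (p i) = 0) →
      (∀ (z : ℂ) (j : Fin 6), j ≠ i → eval (f z).rep (p j) = 0 →
        (∃ e ∈ Δ, ∀ a ∈ e, eval (f z).rep (p a) = 0) ∧ eval (f z).rep sk = 0) →
      ∀ z w : ℂ, f z = f w) :
    -- conclusion: for small `ε ≠ 0`, the complements with `Δ ∪ {D}` and `S_{k+1}` are hyperbolic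
    ∃ ε₀ : ℝ, 0 < ε₀ ∧ ∀ ε : ℂ, ε ≠ 0 → ‖ε‖ < ε₀ →
      ∀ i : Fin 6, ∀ f : ℂ → Projectivization ℂ (Fin 4 → ℂ), HoloToProj f →
        (∀ z : ℂ, eval (f z).rep (p i) = 0) →
        (∀ (z : ℂ) (j : Fin 6), j ≠ i → eval (f z).rep (p j) = 0 →
          (∃ e ∈ insert s(σ 0, σ 1) Δ, ∀ a ∈ e, eval (f z).rep (p a) = 0) ∧
          eval (f z).rep (p (σ 2) * p (σ 3) * p (σ 4) ^ 2 * p (σ 5) ^ 2) =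
            ε * eval (f z).rep sk) →
        ∀ z w : ℂ, f z = f w := by
  have hgeneral := deformation_lemma_general (by simp) hp_lin hgen
    (σ.injective.ne (by decide : (0 : Fin 6) ≠ 1))
    (((((hp_lin (σ 2)).mul (hp_lin (σ 3))).mul ((hp_lin (σ 4)).pow 2)).mul ((hp_lin (σ 5)).pow 2)))
    hsk_hom (eval_prod_sigma_eq_zero_iff p σ) hsk_gen
    fun i f hf hfi => hhyp i f hf (fun z => (hfi z).1) fun z => (hfi z).2
  obtain ⟨ε₀, hε₀, hball⟩ := Metric.eventually_nhds_iff.1 (eventually_nhdsWithin_iff.1 hgeneral)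
  refine ⟨ε₀, hε₀, fun ε hε hεlt i f hf hi hj => ?_⟩
  refine hball (by rwa [dist_zero_right]) hε i f hf fun z => ⟨hi z, fun j hji hjz => ?_⟩
  obtain ⟨hΔ, hS⟩ := hj z j hji hjz
  exact ⟨hΔ, by rw [map_sub, hS, map_mul, eval_C, sub_self]⟩
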